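/- Let (g0, g_{-1}, d, [·,·]) be a finite-dimensional strict Lie 2-algebra over a field k, and let δ1 : g_{-1} → g_{-1}⊗g_{-1}, δ0 : g0 → (g_{-1}⊗g0) ⊕ (g0⊗g_{-1}) be linear maps whose dual operations [·,·]* make g_{-1}* ⊕ g0* a semidirect product Lie algebra: [·,·]* is a Lie bracket on g_{-1}*, the mixed operations satisfy [h*,x*]* = −[x*,h*]*, and (h*, x*) ↦ [h*,x*]* is a representation of the Lie algebra g_{-1}* on g0*. Then the following are equivalent. (A) G* := (g_{-1}*, g0*, d*, [·,·]*) is a strict Lie 2-algebra, and the six matched-pair compatibility conditions hold for G = (g0, g_{-1}, d, [·,·]) and G' = G* with μ = ad* (the coadjoint representation of G on the complex d* : g0* → g_{-1}*) and μ' = 𝔞𝔡* (the coadjoint representation of G* on the complex d : g_{-1} → g0). (B) (δ0, δ1) is a 2-cocycle of G with coefficients in the tensor square, i.e.: (c1) (d⊗1)(π₁(δ0(z))) = (1⊗d)(π₂(δ0(z))) for all z ∈ g0; (c2) δ0(d l) = (1⊗d)(δ1(l)) + (d⊗1)(δ1(l)) for all l ∈ g_{-1}; (c3) δ0([x,y])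 = x·δ0(y) − y·δ0(x) for all x,y ∈ g0; (c4) δ1([x,h]) = x·δ1(h) − h·δ0(x) for all x ∈ g0, h ∈ g_{-1}. Here x· acts on tensors diagonally, x·(a⊗b) = [x,a]⊗b + a⊗[x,b] (using the Lie bracket on g0-factors and the module action on g_{-1}-factors), and h· maps (g_{-1}⊗g0)⊕(g0⊗g_{-1}) to g_{-1}⊗g_{-1} by h·(k⊗z) = −k⊗[z,h] and h·(z⊗k) = −[z,h]⊗k for z ∈ g0, k ∈ g_{-1}. -/

import Mathlib

/-! Every condition on either side is an identity between vectors, covectors or tensors, and on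
finite-dimensional spaces such an identity may be tested by pairing with covectors
(`eq_iff_forall_dual`, `eq_iff_forall_pairing`). After transposing all operators onto the
covectors, each condition becomes a scalar identity in the pairings `⟨η ⊗ θ, δ1 l⟩`,
`⟨η ⊗ ξ, π₁ (δ0 y)⟩` and `⟨ξ ⊗ η, π₂ (δ0 y)⟩`; antisymmetry of the mixed dual bracket expresses the
last one through the second.

In this form the conditions match as follows: (c1) is the Peiffer identity
`[d*ξ, ζ]* + [d*ζ, ξ]* = 0` of `G*`; (c2) is equivariance of `d*`; the compatibility conditions
for `ν00 η [x,y]`, `ν1 ξ [x,y]` and `adStar00 x [η,ξ]*` are all the same scalar identity, namely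
(c3); those for `adStar0m x [η,θ]*`, `adStar1 h [η,θ]*` and `ν01 η [x,h]` are all (c4). The
remaining axioms of the strict Lie 2-algebra `G*` are the semidirect product hypotheses. -/

open TensorProduct

section

variable (k : Type*) [Field k]

/-- A strict Lie 2-algebra structure on a 2-term complex `d : Gm → G0`. -/
def IsStrictLie2 (G0 Gm : Type*) [AddCommGroup G0] [Module k G0]
    [AddCommGroup Gm] [Module k Gm]
    (b0 : G0 → G0 → G0) (b1 : G0 → Gm → Gm) (d : Gm → G0) : Prop :=
  (∀ y : G0, IsLinearMap k fun x => b0 x y) ∧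
  (∀ x : G0, IsLinearMap k (b0 x)) ∧
  (∀ x y : G0, b0 x y = - b0 y x) ∧
  (∀ x y z : G0, b0 (b0 x y) z + b0 (b0 y z) x + b0 (b0 z x) y = 0) ∧
  (∀ h : Gm, IsLinearMap k fun x => b1 x h) ∧
  (∀ x : G0, IsLinearMap k (b1 x)) ∧
  (∀ (x y : G0) (h : Gm), b1 (b0 x y) h = b1 x (b1 y h) - b1 y (b1 x h)) ∧
  IsLinearMap k d ∧
  (∀ (x : G0) (h : Gm), d (b1 x h) = b0 x (d h)) ∧
  (∀ h h' : Gm, b1 (d h) h' + b1 (d h') h = 0)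

variable {g0 gm : Type*}
  [AddCommGroup g0] [Module k g0] [AddCommGroup gm] [Module k gm]

/-- The dual bracket `[h*,k*]*` on `g_{-1}*`: `⟨[h*,k*]*, l⟩ = (h*⊗k*)(δ1(l))`. -/
noncomputable def brMM (δ1 : gm →ₗ[k] gm ⊗[k] gm) (η θ : Module.Dual k gm) :
    Module.Dual k gm :=
  (TensorProduct.lid k k).toLinearMap ∘ₗ TensorProduct.map η θ ∘ₗ δ1

/-- The dual operation `[h*,x*]*`: `⟨[h*,x*]*, y⟩ = (h*⊗x*)(π₁(δ0(y)))`. -/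
noncomputable def brM0 (δ0 : g0 →ₗ[k] (gm ⊗[k] g0) × (g0 ⊗[k] gm))
    (η : Module.Dual k gm) (ξ : Module.Dual k g0) : Module.Dual k g0 :=
  (TensorProduct.lid k k).toLinearMap ∘ₗ TensorProduct.map η ξ ∘ₗ
    (LinearMap.fst k (gm ⊗[k] g0) (g0 ⊗[k] gm) ∘ₗ δ0)

/-- The dual operation `[x*,h*]*`: `⟨[x*,h*]*, y⟩ = (x*⊗h*)(π₂(δ0(y)))`. -/
noncomputable def br0M (δ0 : g0 →ₗ[k] (gm ⊗[k] g0) × (g0 ⊗[k] gm))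
    (ξ : Module.Dual k g0) (η : Module.Dual k gm) : Module.Dual k g0 :=
  (TensorProduct.lid k k).toLinearMap ∘ₗ TensorProduct.map ξ η ∘ₗ
    (LinearMap.snd k (gm ⊗[k] g0) (g0 ⊗[k] gm) ∘ₗ δ0)

/-- The coadjoint action `ad*₀(x)` of `G` on `g_{-1}*`: `⟨ad*₀(x)η, k⟩ = −⟨η, [x,k]⟩`. -/
noncomputable def adStar0m (ρ : g0 →ₗ[k] gm →ₗ[k] gm) (x : g0)
    (η : Module.Dual k gm) : Module.Dual k gm :=
  -(η ∘ₗ ρ x)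

/-- The coadjoint action `ad*₀(x)` of `G` on `g0*`: `⟨ad*₀(x)ξ, y⟩ = −⟨ξ, [x,y]⟩`. -/
noncomputable def adStar00 (b0 : g0 →ₗ[k] g0 →ₗ[k] g0) (x : g0)
    (ξ : Module.Dual k g0) : Module.Dual k g0 :=
  -(ξ ∘ₗ b0 x)

/-- The coadjoint map `ad*₁(h) : g_{-1}* → g0*`: `⟨ad*₁(h)η, y⟩ = ⟨η, [y,h]⟩`. -/
noncomputable def adStar1 (ρ : g0 →ₗ[k] gm →ₗ[k] gm) (h : gm)
    (η : Module.Dual k gm) : Module.Dual k g0 :=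
  η ∘ₗ ρ.flip h

/-- The pairing `⟨η ⊗ θ, t⟩` of two covectors with a tensor, bilinear in the covectors. -/
noncomputable def pairing {M N : Type*} [AddCommGroup M] [Module k M] [AddCommGroup N]
    [Module k N] : Module.Dual k M →ₗ[k] Module.Dual k N →ₗ[k] Module.Dual k (M ⊗[k] N) :=
  (TensorProduct.mk k _ _).compr₂ (TensorProduct.dualDistrib k M N)

section Pairing

variable {M N M' N' : Type*} [AddCommGroup M] [Module k M] [AddCommGroup N] [Module k N]
  [AddCommGroup M'] [Module k M'] [AddCommGroup N'] [Module k N']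

lemma lid_map_eq_pairing (η : Module.Dual k M) (θ : Module.Dual k N) (t : M ⊗[k] N) :
    TensorProduct.lid k k (TensorProduct.map η θ t) = pairing k η θ t := by
  induction t with
  | zero => simp
  | add a b ha hb => simp [ha, hb]
  | tmul a b => simp [pairing]

lemma pairing_map (η : Module.Dual k M') (θ : Module.Dual k N') (f : M →ₗ[k] M')
    (g : N →ₗ[k] N') (t : M ⊗[k] N) :
    pairing k η θ (TensorProduct.map f g t) = pairing k (η ∘ₗ f) (θ ∘ₗ g) t := by
  induction t with
  | zero => simp
  | add a b ha hb => simp [ha, hb]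
  | tmul a b => simp [pairing]

lemma eq_iff_forall_pairing [FiniteDimensional k M] [FiniteDimensional k N] (t u : M ⊗[k] N) :
    t = u ↔ ∀ (η : Module.Dual k M) (θ : Module.Dual k N), pairing k η θ t = pairing k η θ u := by
  refine ⟨fun h _ _ => by rw [h], fun h => ?_⟩
  let b := Module.finBasis k M
  let c := Module.finBasis k N
  refine (b.tensorProduct c).ext_elem fun ⟨i, j⟩ => ?_
  have key : ∀ v : M ⊗[k] N,
      (b.tensorProduct c).repr v (i, j) = pairing k (b.coord i) (c.coord j) v := by
    intro v
    induction v with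
    | zero => simp
    | add a b ha hb => simp [ha, hb]
    | tmul a b => simp [pairing, mul_comm]
  rw [key, key, h]

lemma eq_iff_forall_dual (v w : M) : v = w ↔ ∀ η : Module.Dual k M, η v = η w :=
  ⟨fun h _ => by rw [h], fun h => by
    rw [← sub_eq_zero, ← Module.forall_dual_apply_eq_zero_iff k]
    intro η
    rw [map_sub, h, sub_self]⟩

end Pairing

lemma brMM_apply (δ1 : gm →ₗ[k] gm ⊗[k] gm) (η θ : Module.Dual k gm) (l : gm) :
    brMM k δ1 η θ l = pairing k η θ (δ1 l) :=
  lid_map_eq_pairing k η θ (δ1 l)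

lemma brM0_apply (δ0 : g0 →ₗ[k] (gm ⊗[k] g0) × (g0 ⊗[k] gm)) (η : Module.Dual k gm)
    (ξ : Module.Dual k g0) (y : g0) : brM0 k δ0 η ξ y = pairing k η ξ (δ0 y).1 :=
  lid_map_eq_pairing k η ξ (δ0 y).1

lemma br0M_apply (δ0 : g0 →ₗ[k] (gm ⊗[k] g0) × (g0 ⊗[k] gm)) (ξ : Module.Dual k g0)
    (η : Module.Dual k gm) (y : g0) : br0M k δ0 ξ η y = pairing k ξ η (δ0 y).2 :=
  lid_map_eq_pairing k ξ η (δ0 y).2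

/-- Let `(g0, g_{-1}, d, [·,·])` be a finite-dimensional strict Lie
2-algebra (bracket `b0` on `g0`, action `ρ` of `g0` on `g_{-1}`), and `δ0, δ1` cobrackets
whose dual operations `[·,·]*` make `g_{-1}* ⊕ g0*` a semidirect product Lie algebra.
Then (A): `G* = (g_{-1}*, g0*, d*, [·,·]*)` is a strict Lie 2-algebra and the six
matched-pair compatibility conditions hold for `(G, G*; ad*, 𝔞𝔡*)` — where `ad*` is the
coadjoint representation of `G` and `𝔞𝔡* = (ν00, ν01, ν1)` is the coadjoint
representation of `G*`, characterized by duality — if and only if (B): `(δ0, δ1)` is a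
2-cocycle of `G` with coefficients in `G ⊗ G`, i.e. conditions (c1)–(c4) hold. -/
theorem strictLie2Bialgebra_matchedPair_iff_cocycle
    [FiniteDimensional k g0] [FiniteDimensional k gm]
    (b0 : g0 →ₗ[k] g0 →ₗ[k] g0)
    (hskew : ∀ x y : g0, b0 x y = - b0 y x)
    (hjac : ∀ x y z : g0, b0 (b0 x y) z + b0 (b0 y z) x + b0 (b0 z x) y = 0)
    (ρ : g0 →ₗ[k] gm →ₗ[k] gm)
    (hmod : ∀ (x y : g0) (h : gm), ρ (b0 x y) h = ρ x (ρ y h) - ρ y (ρ x h))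
    (d : gm →ₗ[k] g0)
    (hd : ∀ (x : g0) (h : gm), d (ρ x h) = b0 x (d h))
    (hdd : ∀ h h' : gm, ρ (d h) h' + ρ (d h') h = 0)
    (δ1 : gm →ₗ[k] gm ⊗[k] gm)
    (δ0 : g0 →ₗ[k] (gm ⊗[k] g0) × (g0 ⊗[k] gm))
    -- the dual operations define a semidirect product Lie algebra on `g_{-1}* ⊕ g0*`:
    (hskewD : ∀ η θ : Module.Dual k gm, brMM k δ1 η θ = - brMM k δ1 θ η)
    (hjacD : ∀ η θ ζ : Module.Dual k gm,
      brMM k δ1 (brMM k δ1 η θ) ζ + brMM k δ1 (brMM k δ1 θ ζ) η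
        + brMM k δ1 (brMM k δ1 ζ η) θ = 0)
    (hantiD : ∀ (η : Module.Dual k gm) (ξ : Module.Dual k g0),
      brM0 k δ0 η ξ = - br0M k δ0 ξ η)
    (hrepD : ∀ (η θ : Module.Dual k gm) (ξ : Module.Dual k g0),
      brM0 k δ0 (brMM k δ1 η θ) ξ
        = brM0 k δ0 η (brM0 k δ0 θ ξ) - brM0 k δ0 θ (brM0 k δ0 η ξ))
    -- the coadjoint representation `𝔞𝔡* = (ν00, ν01, ν1)` of `G*` on `d : g_{-1} → g0`,
    -- characterized by duality:
    (ν00 : Module.Dual k gm → g0 → g0)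
    (ν01 : Module.Dual k gm → gm → gm)
    (ν1 : Module.Dual k g0 → g0 → gm)
    (hν00 : ∀ (η : Module.Dual k gm) (x : g0) (ξ : Module.Dual k g0),
      ξ (ν00 η x) = - (brM0 k δ0 η ξ) x)
    (hν01 : ∀ (η : Module.Dual k gm) (h : gm) (θ : Module.Dual k gm),
      θ (ν01 η h) = - (brMM k δ1 η θ) h)
    (hν1 : ∀ (ξ : Module.Dual k g0) (x : g0) (θ : Module.Dual k gm),
      θ (ν1 ξ x) = - (br0M k δ0 ξ θ) x) :
    -- (A)
    ((IsStrictLie2 k (Module.Dual k gm) (Module.Dual k g0)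
        (brMM k δ1) (brM0 k δ0) (fun ξ => ξ ∘ₗ d)) ∧
     -- the six matched-pair compatibility conditions for (G, G*; ad*, 𝔞𝔡*):
     (∀ (η : Module.Dual k gm) (x y : g0),
        ν00 η (b0 x y)
          = b0 x (ν00 η y) + b0 (ν00 η x) y
            + ν00 (adStar0m k ρ y η) x - ν00 (adStar0m k ρ x η) y) ∧
     (∀ (x : g0) (η θ : Module.Dual k gm),
        adStar0m k ρ x (brMM k δ1 η θ)
          = brMM k δ1 η (adStar0m k ρ x θ) + brMM k δ1 (adStar0m k ρ x η) θ
            + adStar0m k ρ (ν00 θ x) η - adStar0m k ρ (ν00 η x) θ) ∧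
     (∀ (ξ : Module.Dual k g0) (x y : g0),
        ν1 ξ (b0 x y)
          = ρ x (ν1 ξ y) - ρ y (ν1 ξ x)
            + ν1 (adStar00 k b0 y ξ) x - ν1 (adStar00 k b0 x ξ) y) ∧
     (∀ (h : gm) (η θ : Module.Dual k gm),
        adStar1 k ρ h (brMM k δ1 η θ)
          = brM0 k δ0 η (adStar1 k ρ h θ) - brM0 k δ0 θ (adStar1 k ρ h η)
            + adStar1 k ρ (ν01 θ h) η - adStar1 k ρ (ν01 η h) θ) ∧
     (∀ (η : Module.Dual k gm) (x : g0) (h : gm),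
        ν01 η (ρ x h)
          = ρ x (ν01 η h) + ρ (ν00 η x) h
            + ν1 (adStar1 k ρ h η) x - ν01 (adStar0m k ρ x η) h) ∧
     (∀ (x : g0) (η : Module.Dual k gm) (ξ : Module.Dual k g0),
        adStar00 k b0 x (brM0 k δ0 η ξ)
          = brM0 k δ0 η (adStar00 k b0 x ξ) + brM0 k δ0 (adStar0m k ρ x η) ξ
            + adStar1 k ρ (ν1 ξ x) η - adStar00 k b0 (ν00 η x) ξ))
    ↔
    -- (B): (δ0, δ1) is a 2-cocycle of G with coefficients in G ⊗ G
    ((∀ z : g0,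
        TensorProduct.map d LinearMap.id ((δ0 z).1)
          = TensorProduct.map LinearMap.id d ((δ0 z).2)) ∧
     (∀ l : gm,
        δ0 (d l) = (TensorProduct.map LinearMap.id d (δ1 l),
                    TensorProduct.map d LinearMap.id (δ1 l))) ∧
     (∀ x y : g0,
        (δ0 (b0 x y)).1
          = (TensorProduct.map (ρ x) LinearMap.id ((δ0 y).1)
              + TensorProduct.map LinearMap.id (b0 x) ((δ0 y).1))
            - (TensorProduct.map (ρ y) LinearMap.id ((δ0 x).1)
              + TensorProduct.map LinearMap.id (b0 y) ((δ0 x).1)) ∧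
        (δ0 (b0 x y)).2
          = (TensorProduct.map (b0 x) LinearMap.id ((δ0 y).2)
              + TensorProduct.map LinearMap.id (ρ x) ((δ0 y).2))
            - (TensorProduct.map (b0 y) LinearMap.id ((δ0 x).2)
              + TensorProduct.map LinearMap.id (ρ y) ((δ0 x).2))) ∧
     (∀ (x : g0) (h : gm),
        δ1 (ρ x h)
          = TensorProduct.map (ρ x) LinearMap.id (δ1 h)
            + TensorProduct.map LinearMap.id (ρ x) (δ1 h)
            + TensorProduct.map LinearMap.id (ρ.flip h) ((δ0 x).1)
            + TensorProduct.map (ρ.flip h) LinearMap.id ((δ0 x).2))) := by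
  have hQ : ∀ (η : Module.Dual k gm) (ξ : Module.Dual k g0) (y : g0),
      pairing k ξ η (δ0 y).2 = - pairing k η ξ (δ0 y).1 := fun η ξ y => by
    rw [← br0M_apply, ← brM0_apply, hantiD, LinearMap.neg_apply, neg_neg]
  have hB : ∀ (η θ : Module.Dual k gm) (l : gm),
      pairing k η θ (δ1 l) = - pairing k θ η (δ1 l) := fun η θ l => by
    rw [← brMM_apply, ← brMM_apply, hskewD, LinearMap.neg_apply]
  simp only [br0M_apply, brM0_apply, brMM_apply, hQ, neg_neg] at hν00 hν01 hν1
  -- The same duality formulas for the actions precomposed with the brackets of `G`.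
  have e1 : ∀ (η : Module.Dual k gm) (x y : g0) (ξ : Module.Dual k g0),
      ξ (b0 y (ν00 η x)) = - pairing k η (ξ ∘ₗ b0 y) (δ0 x).1 :=
    fun η x y ξ => hν00 η x (ξ ∘ₗ b0 y)
  have e2 : ∀ (η : Module.Dual k gm) (x y : g0) (ξ : Module.Dual k g0),
      ξ (b0 (ν00 η x) y) = pairing k η (ξ ∘ₗ b0 y) (δ0 x).1 := fun η x y ξ => by
    rw [hskew, map_neg, e1, neg_neg]
  have e3 : ∀ (η θ : Module.Dual k gm) (x : g0) (h : gm),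
      θ (ρ (ν00 η x) h) = - pairing k η (θ ∘ₗ ρ.flip h) (δ0 x).1 :=
    fun η θ x h => hν00 η x (θ ∘ₗ ρ.flip h)
  have e4 : ∀ (η θ : Module.Dual k gm) (x : g0) (h : gm),
      θ (ρ x (ν01 η h)) = - pairing k η (θ ∘ₗ ρ x) (δ1 h) :=
    fun η θ x h => hν01 η h (θ ∘ₗ ρ x)
  have e5 : ∀ (ξ : Module.Dual k g0) (θ : Module.Dual k gm) (x y : g0),
      θ (ρ y (ν1 ξ x)) = pairing k (θ ∘ₗ ρ y) ξ (δ0 x).1 :=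
    fun ξ θ x y => hν1 ξ x (θ ∘ₗ ρ y)
  -- Beyond the semidirect product hypotheses, only two axioms of `G*` carry information.
  have hG : IsStrictLie2 k (Module.Dual k gm) (Module.Dual k g0)
        (brMM k δ1) (brM0 k δ0) (fun ξ => ξ ∘ₗ d) ↔
      (∀ (η : Module.Dual k gm) (ξ : Module.Dual k g0),
        brM0 k δ0 η ξ ∘ₗ d = brMM k δ1 η (ξ ∘ₗ d)) ∧
      (∀ ξ ζ : Module.Dual k g0, brM0 k δ0 (ξ ∘ₗ d) ζ + brM0 k δ0 (ζ ∘ₗ d) ξ = 0) := by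
    refine ⟨fun ⟨_, _, _, _, _, _, _, _, h, h'⟩ => ⟨h, h'⟩, fun ⟨h, h'⟩ =>
      ⟨fun _ => ⟨fun _ _ => ?_, fun _ _ => ?_⟩, fun _ => ⟨fun _ _ => ?_, fun _ _ => ?_⟩,
        hskewD, hjacD, fun _ => ⟨fun _ _ => ?_, fun _ _ => ?_⟩,
        fun _ => ⟨fun _ _ => ?_, fun _ _ => ?_⟩, hrepD,
        ⟨fun _ _ => LinearMap.add_comp _ _ _, fun _ _ => LinearMap.smul_comp _ _ _⟩, h, h'⟩⟩ <;>
    · ext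
      simp [brMM_apply, brM0_apply]
  rw [hG]
  simp only [eq_iff_forall_dual k (M := g0), eq_iff_forall_dual k (M := gm),
    eq_iff_forall_pairing, Prod.ext_iff, LinearMap.ext_iff, brMM_apply, brM0_apply,
    adStar0m, adStar00, adStar1, LinearMap.add_apply, LinearMap.sub_apply,
    LinearMap.neg_apply, LinearMap.comp_apply, LinearMap.flip_apply, LinearMap.zero_apply,
    map_add, map_sub, map_neg, neg_neg, pairing_map, hQ, hν00, hν01, hν1, e1, e2, e3, e4, e5,
    LinearMap.comp_id]
  constructor
  · rintro ⟨⟨hequiv, hpeiffer⟩, h1, h2, -⟩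
    refine ⟨fun z η θ => ?_, fun l => ⟨fun η θ => hequiv η θ l, fun η θ => ?_⟩,
      fun x y => ⟨fun η θ => ?_, fun η θ => ?_⟩, fun x h η θ => ?_⟩
    · linear_combination hpeiffer η θ z
    · rw [hequiv, hB, neg_neg]
    · linear_combination -h1 η x y θ
    · linear_combination h1 θ x y η
    · linear_combination -h2 x η θ h
  · rintro ⟨c1, c2, c3, c4⟩
    refine ⟨⟨fun η ξ l => (c2 l).1 η ξ, fun ξ ζ z => ?_⟩, fun η x y ξ => ?_,
      fun x η θ h => ?_, fun ξ x y η => ?_, fun h η θ x => ?_, fun η x h θ => ?_,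
      fun x η ξ y => ?_⟩
    · linear_combination c1 z ξ ζ
    · linear_combination -(c3 x y).1 η ξ
    · linear_combination -c4 x h η θ
    · linear_combination (c3 x y).1 η ξ
    · linear_combination c4 x h η θ + hB (η ∘ₗ ρ x) θ h
    · linear_combination -c4 x h η θ
    · linear_combination -(c3 x y).1 η ξ

end
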